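/- Let k ≥ 6 be an integer. (i) For every k-L(2,1)-labelling L of the graph H', the pair (L(c), L(d)) belongs to the set {(0,k), (1,k), (k−1,0), (k,0)}. (ii) Conversely, for every pair (α,β) in this set there exists a k-L(2,1)-labelling L of H' with (L(c), L(d)) = (α,β). -/

import Mathlib

/-- For an integer `k`, a `k`-L(2,1)-labelling of a graph `G` is a map from the vertices
to `{0,1,…,k}` such that labels of adjacent vertices differ by at least `2` and vertices
at distance exactly `2` get distinct labels. -/
def IsL21Labelling {V : Type*} (G : SimpleGraph V) (k : ℕ) (L : V → ℕ) : Prop :=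
  (∀ v, L v ≤ k) ∧
  (∀ x y, G.Adj x y → 2 ≤ |(L x : ℤ) - (L y : ℤ)|) ∧
  (∀ x y, G.dist x y = 2 → L x ≠ L y)

/-- The vertices of the graph `H'` for a given `k`:
`c, d, e, f₁, …, f_{k-3}, g, h, i`. -/
inductive HpV (k : ℕ) | c | d | e | f (j : Fin (k - 3)) | g | h | i
deriving DecidableEq

/-- The adjacency generating relation of `H'`: edges `cd`, `de`, `gh`, `gi`,
and `d fⱼ`, `g fⱼ` for every `j`. -/
def HpAdj (k : ℕ) : HpV k → HpV k → Prop := fun x y =>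
  (x = HpV.c ∧ y = HpV.d) ∨ (x = HpV.d ∧ y = HpV.e) ∨
  (x = HpV.g ∧ y = HpV.h) ∨ (x = HpV.g ∧ y = HpV.i) ∨
  (∃ j, (x = HpV.d ∧ y = HpV.f j) ∨ (x = HpV.g ∧ y = HpV.f j))

/-- The graph `H'`. -/
def Hp (k : ℕ) : SimpleGraph (HpV k) := SimpleGraph.fromRel (HpAdj k)

theorem dist_two_aux {V : Type*} {G : SimpleGraph V} {x y : V} (h : G.dist x y = 2) :
    x ≠ y ∧ ∃ w, G.Adj x w ∧ G.Adj w y := by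
  refine ⟨?_, ?_⟩
  · rintro rfl
    simp at h
  · have hr : G.Reachable x y := SimpleGraph.Reachable.of_dist_ne_zero (by omega)
    obtain ⟨p, hp⟩ := hr.exists_walk_length_eq_dist
    rw [h] at hp
    match p, hp with
    | .cons h1 (.cons h2 .nil), _ => exact ⟨_, h1, h2⟩

theorem two_dist_aux {V : Type*} {G : SimpleGraph V} {x y w : V} (hne : x ≠ y)
    (hn : ¬ G.Adj x y) (h1 : G.Adj x w) (h2 : G.Adj w y) : G.dist x y = 2 := by
  have hr : G.Reachable x y := h1.reachable.trans h2.reachable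
  have hle : G.dist x y ≤ 2 :=
    SimpleGraph.dist_le (SimpleGraph.Walk.cons h1 (SimpleGraph.Walk.cons h2 .nil))
  have h0 : G.dist x y ≠ 0 := fun h => hne (hr.dist_eq_zero_iff.1 h)
  have h1' : G.dist x y ≠ 1 := fun h => hn (SimpleGraph.dist_eq_one_iff_adj.1 h)
  omega

/-- A vertex with `k-1` neighbours is labelled `0` or `k`. -/
theorem extreme_aux (k : ℕ) (hk : 6 ≤ k) (F : Finset ℕ) (hF : F.card = k - 3) (c d e : ℕ)
    (hd : d ≤ k) (hce : c ≠ e) (hc : c ∉ F) (he : e ∉ F)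
    (hall : ∀ x ∈ insert c (insert e F), x ≤ k ∧ 2 ≤ |(x : ℤ) - d|) : d = 0 ∨ d = k := by
  by_contra hcon
  have hcard : (insert c (insert e F)).card = k - 1 := by
    rw [Finset.card_insert_of_notMem (by simp [hce, hc]), Finset.card_insert_of_notMem he, hF]
    omega
  have hsub : insert c (insert e F) ⊆ Finset.range (d - 1) ∪ Finset.Ioc (d + 1) k := by
    intro x hx
    have := hall x hx
    simp only [Finset.mem_union, Finset.mem_range, Finset.mem_Ioc]
    have h2 := this.2
    rw [le_abs] at h2
    omega
  have h1 := Finset.card_le_card hsub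
  have h2 := Finset.card_union_le (Finset.range (d - 1)) (Finset.Ioc (d + 1) k)
  simp only [Finset.card_range, Nat.card_Ioc] at h2
  omega

theorem part_one (k : ℕ) (hk : 6 ≤ k) (L : HpV k → ℕ) (hL : IsL21Labelling (Hp k) k L) :
    (L HpV.c, L HpV.d) ∈ ({(0,k),(1,k),(k-1,0),(k,0)} : Set (ℕ × ℕ)) := by
  obtain ⟨hb, ha, h2⟩ := hL
  have key : ∀ w x y, (Hp k).Adj x w → (Hp k).Adj w y → x ≠ y → ¬ (Hp k).Adj x y → L x ≠ L y :=
    fun w x y h1 h3 h4 h5 => h2 x y (two_dist_aux h4 h5 h1 h3)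
  have hcd := ha .c .d (by simp [Hp, HpAdj])
  have hed := ha .e .d (by simp [Hp, HpAdj])
  have hhg := ha .h .g (by simp [Hp, HpAdj])
  have hig := ha .i .g (by simp [Hp, HpAdj])
  have hfd := fun j => ha (.f j) .d (by simp [Hp, HpAdj])
  have hfg := fun j => ha (.f j) .g (by simp [Hp, HpAdj])
  have hce := key .d .c .e (by simp [Hp, HpAdj]) (by simp [Hp, HpAdj]) (by simp) (by simp [Hp, HpAdj])
  have hhi := key .g .h .i (by simp [Hp, HpAdj]) (by simp [Hp, HpAdj]) (by simp) (by simp [Hp, HpAdj])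
  have hcf := fun j => key .d .c (.f j) (by simp [Hp, HpAdj]) (by simp [Hp, HpAdj]) (by simp) (by simp [Hp, HpAdj])
  have hef := fun j => key .d .e (.f j) (by simp [Hp, HpAdj]) (by simp [Hp, HpAdj]) (by simp) (by simp [Hp, HpAdj])
  have hhf := fun j => key .g .h (.f j) (by simp [Hp, HpAdj]) (by simp [Hp, HpAdj]) (by simp) (by simp [Hp, HpAdj])
  have hif := fun j => key .g .i (.f j) (by simp [Hp, HpAdj]) (by simp [Hp, HpAdj]) (by simp) (by simp [Hp, HpAdj])
  have hdg := key (.f ⟨0, by omega⟩) .d .g (by simp [Hp, HpAdj]) (by simp [Hp, HpAdj]) (by simp) (by simp [Hp, HpAdj])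
  have hff : Function.Injective (fun j => L (.f j)) := by
    intro i j hij
    by_contra hne
    exact key .d (.f i) (.f j) (by simp [Hp, HpAdj]) (by simp [Hp, HpAdj]) (by simpa using hne) (by simp [Hp, HpAdj]) hij
  obtain ⟨F, hFdef⟩ : ∃ F : Finset ℕ, F = Finset.univ.image (fun j => L (.f j)) := ⟨_, rfl⟩
  have hF : F.card = k - 3 := by
    rw [hFdef, Finset.card_image_of_injective _ hff]; simp
  have hmem : ∀ x, x ∈ F ↔ ∃ j, L (.f j) = x := by intro x; simp [hFdef]
  have hcF : L .c ∉ F := by rw [hmem]; rintro ⟨j, hj⟩; exact hcf j hj.symm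
  have heF : L .e ∉ F := by rw [hmem]; rintro ⟨j, hj⟩; exact hef j hj.symm
  have hhF : L .h ∉ F := by rw [hmem]; rintro ⟨j, hj⟩; exact hhf j hj.symm
  have hiF : L .i ∉ F := by rw [hmem]; rintro ⟨j, hj⟩; exact hif j hj.symm
  have hd := extreme_aux k hk F hF _ _ _ (hb .d) hce hcF heF (by
    intro x hx
    simp only [Finset.mem_insert, hmem] at hx
    rcases hx with rfl | rfl | ⟨j, rfl⟩
    exacts [⟨hb _, hcd⟩, ⟨hb _, hed⟩, ⟨hb _, hfd j⟩])
  have hg := extreme_aux k hk F hF _ _ _ (hb .g) hhi hhF hiF (by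
    intro x hx
    simp only [Finset.mem_insert, hmem] at hx
    rcases hx with rfl | rfl | ⟨j, rfl⟩
    exacts [⟨hb _, hhg⟩, ⟨hb _, hig⟩, ⟨hb _, hfg j⟩])
  have hFeq : F = Finset.Icc 2 (k - 2) := by
    apply Finset.eq_of_subset_of_card_le
    · intro x hx
      obtain ⟨j, rfl⟩ := (hmem x).1 hx
      have h3 := hfd j
      have h4 := hfg j
      have h5 := hb (.f j)
      rw [le_abs] at h3 h4
      rw [Finset.mem_Icc]
      omega
    · rw [hF, Nat.card_Icc]; omega
  rw [hFeq, Finset.mem_Icc] at hcF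
  have h5 := hb .c
  rw [le_abs] at hcd
  simp only [Set.mem_insert_iff, Set.mem_singleton_iff, Prod.mk.injEq]
  omega

/-- Labelling with prescribed values; `f_j` gets `j+2`. -/
def mkLab (k c d e g h i : ℕ) : HpV k → ℕ
  | .c => c
  | .d => d
  | .e => e
  | .f j => j.1 + 2
  | .g => g
  | .h => h
  | .i => i

theorem mkLab_ok (k c d e g h i : ℕ) (hk : 6 ≤ k)
    (H : (d = k ∧ g = 0 ∧ c + e = 1 ∧ h = k - 1 ∧ i = k) ∨
      (d = 0 ∧ g = k ∧ c ≤ k ∧ e ≤ k ∧ c + e = 2 * k - 1 ∧ h = 0 ∧ i = 1)) :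
    IsL21Labelling (Hp k) k (mkLab k c d e g h i) := by
  refine ⟨?_, ?_, ?_⟩
  · rintro (_ | _ | _ | j | _ | _ | _) <;> simp only [mkLab] <;> omega
  · rintro (_ | _ | _ | j | _ | _ | _) (_ | _ | _ | j' | _ | _ | _) hadj <;>
      simp [Hp, HpAdj] at hadj <;> simp only [mkLab] <;> rw [le_abs] <;> omega
  · intro x y hxy
    obtain ⟨hne, w, h1, h2⟩ := dist_two_aux hxy
    rcases x with (_ | _ | _ | j | _ | _ | _) <;> rcases y with (_ | _ | _ | j' | _ | _ | _) <;>
      simp only [mkLab] <;> first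
      | exact absurd rfl hne
      | (have hjj : j.1 ≠ j'.1 := fun hh => hne (by rw [Fin.ext hh])
         omega)
      | omega
      | (exfalso
         rcases w with (_ | _ | _ | l | _ | _ | _) <;> simp [Hp, HpAdj] at h1 h2)

/-- For `k ≥ 6`: (i) every `k`-L(2,1)-labelling `L` of `H'` has
`(L c, L d) ∈ {(0,k),(1,k),(k-1,0),(k,0)}`; (ii) every pair in this set is realised
by some `k`-L(2,1)-labelling of `H'`. -/
theorem stmt_9 (k : ℕ) (hk : 6 ≤ k) :
    (∀ L : HpV k → ℕ, IsL21Labelling (Hp k) k L →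
      (L HpV.c, L HpV.d) ∈ ({(0,k),(1,k),(k-1,0),(k,0)} : Set (ℕ × ℕ))) ∧
    (∀ p ∈ ({(0,k),(1,k),(k-1,0),(k,0)} : Set (ℕ × ℕ)),
      ∃ L : HpV k → ℕ, IsL21Labelling (Hp k) k L ∧ (L HpV.c, L HpV.d) = p) := by
  refine ⟨part_one k hk, ?_⟩
  intro p hp
  simp only [Set.mem_insert_iff, Set.mem_singleton_iff] at hp
  rcases hp with rfl | rfl | rfl | rfl
  · exact ⟨mkLab k 0 k 1 0 (k - 1) k, mkLab_ok _ _ _ _ _ _ _ hk (by omega), rfl⟩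
  · exact ⟨mkLab k 1 k 0 0 (k - 1) k, mkLab_ok _ _ _ _ _ _ _ hk (by omega), rfl⟩
  · exact ⟨mkLab k (k - 1) 0 k k 0 1, mkLab_ok _ _ _ _ _ _ _ hk (by omega), rfl⟩
  · exact ⟨mkLab k k 0 (k - 1) k 0 1, mkLab_ok _ _ _ _ _ _ _ hk (by omega), rfl⟩
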